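/- Let P = { q_{i_1 i_2 i_3 i_4 i_5} q_{j_1 j_2 j_3 j_4 j_5} : i_k + j_k = 1 and i_k, j_k ∈ {0,1} for all 1 ≤ k ≤ 5 } be the set of quadratic monomials whose two subscript vectors are complementary. Then for all u, v ∈ P the binomial u − v belongs to I_5 = ker φ_5, and for all u, v ∈ P with u ≠ v the binomial u − v does not belong to the set G_5. -/

import Mathlib

open MvPolynomial

/-- The homomorphism `φ_m` sending `q_{i_1⋯i_m}` to
`a_{i_1}^{(1)} ⋯ a_{i_m}^{(m)} a_{i_1+⋯+i_m mod 2}^{(m+1)}`.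
Here `(0,1)`-vectors are modeled as `Fin m → Bool`, and the variable `a_i^{(j)}` is
indexed by the pair `(j, i) : Fin (m+1) × Bool`. -/
noncomputable def phiCut (K : Type*) [CommRing K] (m : ℕ) :
    MvPolynomial (Fin m → Bool) K →ₐ[K] MvPolynomial (Fin (m + 1) × Bool) K :=
  aeval fun v =>
    (∏ j : Fin m, (X (Fin.castSucc j, v j) : MvPolynomial (Fin (m + 1) × Bool) K)) *
      X (Fin.last m, decide ((∑ j : Fin m, if v j then 1 else 0) % 2 = 1))

/-- The set `G_{m+1}` of quadratic binomials
`q_{i_1⋯i_{m+1}} q_{j_1⋯j_{m+1}} - q_{k_1⋯k_{m+1}} q_{l_1⋯l_{m+1}} ∈ I_{m+1}` such that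
either (1) for some position `a` all four subscripts agree at `a` and the binomial
obtained by deleting the `a`-th index lies in `I_m`, or (2) at every position `b` the
subscripts satisfy `i_b + j_b = 1 = k_b + l_b` and the binomial obtained by deleting the
`b`-th index lies in `I_m`. -/
def Gset (K : Type*) [Field K] (m : ℕ) : Set (MvPolynomial (Fin (m + 1) → Bool) K) :=
  {f | ∃ I J L M : Fin (m + 1) → Bool,
    f = X I * X J - X L * X M ∧
    f ∈ RingHom.ker (phiCut K (m + 1)).toRingHom ∧
    ((∃ a : Fin (m + 1), I a = J a ∧ J a = L a ∧ L a = M a ∧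
        (X (a.removeNth I) * X (a.removeNth J) - X (a.removeNth L) * X (a.removeNth M) :
          MvPolynomial (Fin m → Bool) K) ∈ RingHom.ker (phiCut K m).toRingHom) ∨
      (∀ b : Fin (m + 1), I b ≠ J b ∧ L b ≠ M b ∧
        (X (b.removeNth I) * X (b.removeNth J) - X (b.removeNth L) * X (b.removeNth M) :
          MvPolynomial (Fin m → Bool) K) ∈ RingHom.ker (phiCut K m).toRingHom))}

/-!
Complementing a `(0,1)`-vector swaps the two variables at each coordinate, and in odd length it
also flips the parity of the number of ones, so all complementary monomials have the same image
under `φ`.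

A binomial of type (1) involves only variables `q_v` with `v_a` a fixed `c`, whereas every
complementary monomial has a factor with `v_a ≠ c`; a difference of complementary monomials that
is of type (1) is therefore `0`. In type (2), deleting a coordinate leaves vectors `I'`, `I'ᶜ` of
even length, which have the same parity, so the last factor of `φ` forces `I'` and `L'` to have
the same parity too. Hence `I_b + L_b` is the same mod 2 for every `b`: either `L = I` or `L = Iᶜ`,
and again the binomial is `0`.
-/

/-- The set `P` of quadratic monomials `q_w q_{wᶜ}`; the complement of a Boolean vector is
`fun k => !w k`. -/
def complementaryMonomials (K ι : Type*) [CommSemiring K] : Set (MvPolynomial (ι → Bool) K) :=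
  {p | ∃ w : ι → Bool, p = X w * X wᶜ}

/-- The sum mod 2 of the entries of a `(0,1)`-vector, encoded as in the index of the last factor
of `phiCut`. -/
def parity {ι : Type*} [Fintype ι] (v : ι → Bool) : Bool :=
  decide ((∑ j, if v j then 1 else 0) % 2 = 1)

theorem parity_compl {ι : Type*} [Fintype ι] (v : ι → Bool) :
    parity vᶜ = (decide (Odd (Fintype.card ι)) ^^ parity v) := by
  have hsum : (∑ j, if v j then 1 else 0) + (∑ j, if vᶜ j then 1 else 0) = Fintype.card ι := by
    rw [← Finset.sum_add_distrib, Fintype.card_eq_sum_ones]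
    refine Finset.sum_congr rfl fun j _ => ?_
    cases h : v j <;> simp [h]
  rw [Bool.eq_iff_iff]
  simp only [parity, bne_iff_ne, ne_eq, decide_eq_decide, decide_eq_true_eq, Nat.odd_iff]
  omega

theorem parity_removeNth {m : ℕ} (b : Fin (m + 1)) (v : Fin (m + 1) → Bool) :
    parity (b.removeNth v) = (v b ^^ parity v) := by
  have hsum : (∑ j, if v j then 1 else 0) =
      (if v b then 1 else 0) + ∑ j, if b.removeNth v j then 1 else 0 :=
    Fin.sum_univ_succAbove _ b
  simp only [parity, hsum]
  generalize ∑ j, (if b.removeNth v j then 1 else 0) = n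
  rw [Bool.eq_iff_iff]
  cases v b
  · simp
  · simp only [if_true, decide_eq_true_eq, Bool.true_bne, Bool.not_eq_true',
      decide_eq_false_iff_not]
    omega

theorem eq_or_eq_compl_of_parity_removeNth_eq {m : ℕ} {v w : Fin (m + 1) → Bool}
    (h : ∀ b : Fin (m + 1), parity (b.removeNth v) = parity (b.removeNth w)) :
    v = w ∨ v = wᶜ := by
  simp only [parity_removeNth] at h
  by_cases hvw : parity v = parity w
  · left
    funext b
    simpa [hvw] using h b
  · right
    funext b
    have hb := h b
    rw [Bool.eq_not_of_ne hvw, ← Bool.not_xor_not (w b)] at hb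
    exact Bool.xor_left_inj.1 hb

theorem X_mul_X_not {R σ : Type*} [CommSemiring R] (s : σ) (c : Bool) :
    (X (s, c) * X (s, !c) : MvPolynomial (σ × Bool) R) = X (s, false) * X (s, true) := by
  cases c
  · rfl
  · exact mul_comm _ _

section PhiCut

variable {K : Type*} [CommRing K] {m : ℕ}

theorem phiCut_X (v : Fin m → Bool) :
    phiCut K m (X v) = (∏ j : Fin m, X (j.castSucc, v j)) * X (Fin.last m, parity v) :=
  aeval_X _ v

theorem phiCut_X_mul_X_compl (hm : Odd m) (v : Fin m → Bool) :
    phiCut K m (X v * X vᶜ) = ∏ j : Fin (m + 1), X (j, false) * X (j, true) := by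
  have hparity : parity vᶜ = !parity v := by
    simp [parity_compl, hm]
  rw [map_mul, phiCut_X, phiCut_X, mul_mul_mul_comm, ← Finset.prod_mul_distrib, hparity,
    Fin.prod_univ_castSucc]
  simp only [Pi.compl_apply, Bool.compl_eq_bnot, X_mul_X_not]

theorem sub_mem_ker_phiCut_of_mem_complementaryMonomials (hm : Odd m)
    {u v : MvPolynomial (Fin m → Bool) K} (hu : u ∈ complementaryMonomials K (Fin m))
    (hv : v ∈ complementaryMonomials K (Fin m)) :
    u - v ∈ RingHom.ker (phiCut K m).toRingHom := by
  obtain ⟨w, rfl⟩ := hu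
  obtain ⟨z, rfl⟩ := hv
  exact (RingHom.sub_mem_ker_iff _).2 <|
    (phiCut_X_mul_X_compl hm w).trans (phiCut_X_mul_X_compl hm z).symm

theorem parity_pair_eq_of_sub_mem_ker_phiCut [Nontrivial K] {I J L M : Fin m → Bool}
    (h : (X I * X J - X L * X M : MvPolynomial (Fin m → Bool) K) ∈
      RingHom.ker (phiCut K m).toRingHom) :
    s(parity I, parity J) = s(parity L, parity M) := by
  have himage : phiCut K m (X I * X J) = phiCut K m (X L * X M) :=
    (RingHom.sub_mem_ker_iff _).1 h
  have havoid (c : Bool) :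
      parity I ≠ c ∧ parity J ≠ c ↔ parity L ≠ c ∧ parity M ≠ c := by
    -- This evaluation kills `q_v` exactly when `v` has parity `c`.
    have heval := congrArg (aeval fun x => if x = (Fin.last m, c) then (0 : K) else 1) himage
    simp only [map_mul, phiCut_X, map_prod, aeval_X, Prod.mk.injEq, Fin.castSucc_ne_last,
      false_and, true_and, if_false, Finset.prod_const_one, one_mul] at heval
    split_ifs at heval <;> simp_all
  have hfalse := havoid false
  have htrue := havoid true
  generalize parity I = i, parity J = j, parity L = k, parity M = l at hfalse htrue ⊢
  revert i j k l
  decide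

end PhiCut

section Support

variable {R : Type*} [CommSemiring R]

theorem eq_zero_of_mem_supported_of_mem_span_X_compl {σ : Type*} {s : Set σ}
    {f : MvPolynomial σ R} (hsupp : f ∈ supported R s) (hspan : f ∈ Ideal.span (X '' sᶜ)) :
    f = 0 := by
  by_contra hf
  obtain ⟨d, hd⟩ := support_nonempty.2 hf
  obtain ⟨i, his, hdi⟩ := mem_ideal_span_X_image.1 hspan d hd
  exact his (mem_supported.1 hsupp
    (mem_vars_iff_mem_support i |>.2 ⟨d, hd, Finsupp.mem_support_iff.2 hdi⟩))

theorem mem_span_X_of_mem_complementaryMonomials {ι : Type*} {p : MvPolynomial (ι → Bool) R}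
    (hp : p ∈ complementaryMonomials R ι) (a : ι) (c : Bool) :
    p ∈ Ideal.span (X '' {v : ι → Bool | v a = c}ᶜ) := by
  obtain ⟨w, rfl⟩ := hp
  by_cases hw : w a = c
  · refine Ideal.mul_mem_left _ _ (Ideal.subset_span ⟨wᶜ, ?_, rfl⟩)
    simp [hw]
  · exact Ideal.mul_mem_right _ _ (Ideal.subset_span ⟨w, hw, rfl⟩)

end Support

section Binomials

variable {R : Type*} [CommRing R]

theorem eq_of_sub_eq_binomial_of_common_coordinate {ι : Type*}
    {u v : MvPolynomial (ι → Bool) R} (hu : u ∈ complementaryMonomials R ι)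
    (hv : v ∈ complementaryMonomials R ι) {I J L M : ι → Bool}
    (huv : u - v = X I * X J - X L * X M) {a : ι}
    (hIJ : I a = J a) (hJL : J a = L a) (hLM : L a = M a) : u = v := by
  refine sub_eq_zero.1 (eq_zero_of_mem_supported_of_mem_span_X_compl
    (s := {w : ι → Bool | w a = M a}) ?_ ?_)
  · rw [huv]
    have hX {w : ι → Bool} (hw : w a = M a) :
        (X w : MvPolynomial (ι → Bool) R) ∈ supported R {w : ι → Bool | w a = M a} :=
      Algebra.subset_adjoin ⟨w, hw, rfl⟩
    exact sub_mem (mul_mem (hX (hIJ.trans (hJL.trans hLM))) (hX (hJL.trans hLM)))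
      (mul_mem (hX hLM) (hX rfl))
  · exact sub_mem (mem_span_X_of_mem_complementaryMonomials hu a _)
      (mem_span_X_of_mem_complementaryMonomials hv a _)

theorem X_mul_X_compl_eq_of_removeNth_sub_mem_ker [Nontrivial R] {m : ℕ} (hm : Even m)
    {I L : Fin (m + 1) → Bool}
    (h : ∀ b : Fin (m + 1),
      (X (b.removeNth I) * X (b.removeNth Iᶜ) - X (b.removeNth L) * X (b.removeNth Lᶜ) :
        MvPolynomial (Fin m → Bool) R) ∈ RingHom.ker (phiCut R m).toRingHom) :
    (X I * X Iᶜ : MvPolynomial (Fin (m + 1) → Bool) R) = X L * X Lᶜ := by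
  have hcompl (v : Fin m → Bool) : parity vᶜ = parity v := by
    simp [parity_compl, Nat.not_odd_iff_even.2 hm]
  have hparity (b : Fin (m + 1)) : parity (b.removeNth I) = parity (b.removeNth L) := by
    have hpair : s(parity (b.removeNth I), parity (b.removeNth I)ᶜ) =
        s(parity (b.removeNth L), parity (b.removeNth L)ᶜ) :=
      parity_pair_eq_of_sub_mem_ker_phiCut (h b)
    simpa [hcompl] using hpair
  rcases eq_or_eq_compl_of_parity_removeNth_eq hparity with rfl | rfl
  · rfl
  · rw [compl_compl, mul_comm]

end Binomials

theorem complementary_binomials_mem_I5_not_mem_G5_general (K : Type*) [Field K] {m : ℕ}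
    (hm : Even m) :
    (∀ u ∈ complementaryMonomials K (Fin (m + 1)), ∀ v ∈ complementaryMonomials K (Fin (m + 1)),
      u - v ∈ RingHom.ker (phiCut K (m + 1)).toRingHom) ∧
    (∀ u ∈ complementaryMonomials K (Fin (m + 1)), ∀ v ∈ complementaryMonomials K (Fin (m + 1)),
      u ≠ v → u - v ∉ Gset K m) := by
  refine ⟨fun u hu v hv =>
    sub_mem_ker_phiCut_of_mem_complementaryMonomials hm.add_one hu hv, ?_⟩
  rintro u hu v hv huv ⟨I, J, L, M, hf, -, ⟨a, hIJ, hJL, hLM, -⟩ | hall⟩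
  · exact huv (eq_of_sub_eq_binomial_of_common_coordinate hu hv hf hIJ hJL hLM)
  · obtain rfl : J = Iᶜ := funext fun b => Bool.eq_not_of_ne (hall b).1.symm
    obtain rfl : M = Lᶜ := funext fun b => Bool.eq_not_of_ne (hall b).2.1.symm
    have hIL := X_mul_X_compl_eq_of_removeNth_sub_mem_ker hm fun b => (hall b).2.2
    exact huv (sub_eq_zero.1 (hf.trans (sub_eq_zero.2 hIL)))

/-- Let `P` be the set of quadratic monomials `q_{i_1⋯i_5} q_{j_1⋯j_5}` whose two
subscript vectors are complementary. Then for all `u, v ∈ P` the binomial `u - v` lies in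
`I_5 = ker φ_5`, and for all distinct `u, v ∈ P` the binomial `u - v` does not lie in
`G_5`. -/
theorem complementary_binomials_mem_I5_not_mem_G5 (K : Type*) [Field K] :
    (∀ u ∈ {p : MvPolynomial (Fin 5 → Bool) K | ∃ w : Fin 5 → Bool,
        p = X w * X (fun k => ! w k)},
      ∀ v ∈ {p : MvPolynomial (Fin 5 → Bool) K | ∃ w : Fin 5 → Bool,
        p = X w * X (fun k => ! w k)},
      u - v ∈ RingHom.ker (phiCut K 5).toRingHom) ∧
    (∀ u ∈ {p : MvPolynomial (Fin 5 → Bool) K | ∃ w : Fin 5 → Bool,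
        p = X w * X (fun k => ! w k)},
      ∀ v ∈ {p : MvPolynomial (Fin 5 → Bool) K | ∃ w : Fin 5 → Bool,
        p = X w * X (fun k => ! w k)},
      u ≠ v → u - v ∉ Gset K 4) := by
  exact complementary_binomials_mem_I5_not_mem_G5_general K (by decide : Even 4)
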